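/- Rate–distortion theorem for average concept distortion (Theorem 1): For the problem of communicating concepts with the average distortion d_avg, the rate–distortion function satisfies R(ε) = min over all learning rules Q̃ with d_sem(Q, Q̃) ≤ ε of I_{Q̃}(S;H), where the mutual information is computed under the joint pmf P_S(s)·Q̃(h|s). -/

import Mathlib

open Finset Filter Topology Classical

noncomputable section

/-- `p` is a probability mass function on a finite type. -/
def IsPMF {α : Type*} [Fintype α] (p : α → ℝ) : Prop :=
  (∀ a, 0 ≤ p a) ∧ ∑ a, p a = 1

/-- A learning rule assigns a pmf on models to every dataset. -/
def IsRule {S H : Type*} [Fintype H] (Q : S → H → ℝ) : Prop :=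
  ∀ s, IsPMF (Q s)

/-- True loss `L_c(q)` of a belief `q` over models on concept `c`. -/
def trueLoss {C H : Type*} [Fintype H] (L : C → H → ℝ) (c : C) (q : H → ℝ) : ℝ :=
  ∑ h, q h * L c h

/-- Semantic distortion `d_sem(Q, Q̂)` between two learning rules. -/
def dsem {C S H : Type*} [Fintype C] [Fintype S] [Fintype H]
    (PCS : C → S → ℝ) (L : C → H → ℝ) (Q Qhat : S → H → ℝ) : ℝ :=
  ∑ c, ∑ s, PCS c s * (trueLoss L c (Qhat s) - trueLoss L c (Q s))

/-- Conditional law `Q̂ᵢ(h|s) = P(Ĥᵢ = h | Sᵢ = s)` of the `i`-th decoded model,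
induced by a deterministic blocklength-`n` map `Sⁿ → Hⁿ` when `S₁,…,Sₙ` are
i.i.d. with law `PS`. -/
noncomputable def inducedRule {S H : Type*} [Fintype S] (PS : S → ℝ) {n : ℕ}
    (code : (Fin n → S) → (Fin n → H)) (i : Fin n) : S → H → ℝ := fun s h =>
  (∑ sn : Fin n → S, if sn i = s ∧ code sn i = h then ∏ j, PS (sn j) else 0) / PS s

/-- Average per-model distortion `d_avg` of a blocklength-`n` code. -/
noncomputable def davgCode {C S H : Type*} [Fintype C] [Fintype S] [Fintype H]
    (PCS : C → S → ℝ) (PS : S → ℝ) (L : C → H → ℝ) (Q : S → H → ℝ) {n : ℕ}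
    (code : (Fin n → S) → (Fin n → H)) : ℝ :=
  (1 / (n : ℝ)) * ∑ i : Fin n, dsem PCS L Q (inducedRule PS code i)

/-- Number of messages `⌈2^{nR}⌉` of a `(2^{nR}, n)` code. -/
noncomputable def numMsg (R : ℝ) (n : ℕ) : ℕ := ⌈(2 : ℝ) ^ ((n : ℝ) * R)⌉₊

/-- `(R, ε)` is achievable for `d_avg`: there is a sequence of `(2^{nR}, n)`
codes whose average distortion converges to a limit `< ε`. -/
def AchAvg {C S H : Type*} [Fintype C] [Fintype S] [Fintype H]
    (PCS : C → S → ℝ) (PS : S → ℝ) (L : C → H → ℝ) (Q : S → H → ℝ)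
    (R ε : ℝ) : Prop :=
  ∃ (f : ∀ n : ℕ, (Fin n → S) → Fin (numMsg R n))
    (g : ∀ n : ℕ, Fin (numMsg R n) → (Fin n → H)) (l : ℝ),
      Tendsto (fun n : ℕ => davgCode PCS PS L Q (fun sn => g n (f n sn)))
        atTop (nhds l) ∧ l < ε

/-- Mutual information `I_{Q̃}(S;H)` (in bits) of a learning rule `Q̃` under the
dataset marginal `PS`. -/
noncomputable def minfo {S H : Type*} [Fintype S] [Fintype H]
    (PS : S → ℝ) (Qt : S → H → ℝ) : ℝ :=
  ∑ s, ∑ h, PS s * Qt s h * Real.logb 2 (Qt s h / ∑ s', PS s' * Qt s' h)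

section Helpers

lemma sum_prod_pi {S : Type*} [Fintype S] {n : ℕ} (F : Fin n → S → ℝ) :
    ∑ x : Fin n → S, ∏ j, F j (x j) = ∏ j, ∑ s, F j s := by
  rw [Finset.prod_univ_sum]
  simp [Fintype.piFinset_univ]

lemma sum_pn_one {S : Type*} [Fintype S] {n : ℕ} {PS : S → ℝ} (h : IsPMF PS) :
    ∑ x : Fin n → S, ∏ j, PS (x j) = 1 := by
  rw [sum_prod_pi (fun _ => PS)]
  simp [h.2]

lemma sum_pn_marg {S : Type*} [Fintype S] {n : ℕ} {PS : S → ℝ} (h : IsPMF PS)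
    (i : Fin n) (F : S → ℝ) :
    ∑ x : Fin n → S, (∏ j, PS (x j)) * F (x i) = ∑ s, PS s * F s := by
  have h1 : ∀ x : Fin n → S, (∏ j, PS (x j)) * F (x i) =
      ∏ j, (PS (x j) * if j = i then F (x j) else 1) := by
    intro x
    rw [Finset.prod_mul_distrib]
    simp
  simp_rw [h1]
  rw [sum_prod_pi (fun j s => PS s * if j = i then F s else 1)]
  rw [Finset.prod_eq_single i]
  · simp
  · intro j _ hj
    simp [hj, h.2]
  · simp

/-- Weighted loss. -/
def wloss {C S H : Type*} [Fintype C] (PCS : C → S → ℝ) (L : C → H → ℝ) (s : S) (h : H) : ℝ :=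
  ∑ c, PCS c s * L c h

/-- per-letter distortion. -/
def dd {C S H : Type*} [Fintype C] (PCS : C → S → ℝ) (PS : S → ℝ) (L : C → H → ℝ)
    (s : S) (h : H) : ℝ :=
  wloss PCS L s h / PS s

/-- constant offset. -/
def doff {C S H : Type*} [Fintype C] [Fintype S] [Fintype H]
    (PCS : C → S → ℝ) (L : C → H → ℝ) (Q : S → H → ℝ) : ℝ :=
  ∑ s, ∑ h, Q s h * wloss PCS L s h

lemma dsem_eq {C S H : Type*} [Fintype C] [Fintype S] [Fintype H]
    (PCS : C → S → ℝ) (L : C → H → ℝ) (Q Qh : S → H → ℝ) :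
    dsem PCS L Q Qh = ∑ s, ∑ h, Qh s h * wloss PCS L s h - doff PCS L Q := by
  have key : ∀ q : S → H → ℝ, ∑ c, ∑ s, PCS c s * trueLoss L c (q s) =
      ∑ s, ∑ h, q s h * wloss PCS L s h := by
    intro q
    rw [Finset.sum_comm]
    refine Finset.sum_congr rfl fun s _ => ?_
    simp only [trueLoss, wloss, Finset.mul_sum]
    rw [Finset.sum_comm]
    refine Finset.sum_congr rfl fun h _ => Finset.sum_congr rfl fun c _ => ?_
    ring
  unfold dsem doff
  simp only [mul_sub, Finset.sum_sub_distrib, key]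

lemma induced_sum {S H : Type*} [Fintype S] [Fintype H] (PS : S → ℝ) {n : ℕ}
    (code : (Fin n → S) → (Fin n → H)) (i : Fin n) (G : S → H → ℝ) :
    ∑ s, ∑ h, inducedRule PS code i s h * G s h =
      ∑ x : Fin n → S, (∏ j, PS (x j)) * (G (x i) (code x i) / PS (x i)) := by
  have h1 : ∀ s h, inducedRule PS code i s h * G s h =
      ∑ x : Fin n → S, if x i = s then (if code x i = h then
        (∏ j, PS (x j)) * (G s h / PS s) else 0) else 0 := by
    intro s h
    unfold inducedRule
    rw [Finset.sum_div, Finset.sum_mul]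
    refine Finset.sum_congr rfl fun x _ => ?_
    by_cases h1 : x i = s <;> by_cases h2 : code x i = h <;> simp [h1, h2]
    ring
  simp_rw [h1]
  have h2 : ∀ s, ∑ h, ∑ x : Fin n → S, (if x i = s then (if code x i = h then
        (∏ j, PS (x j)) * (G s h / PS s) else 0) else 0) =
      ∑ x : Fin n → S, if x i = s then (∏ j, PS (x j)) * (G s (code x i) / PS s) else 0 := by
    intro s
    rw [Finset.sum_comm]
    refine Finset.sum_congr rfl fun x _ => ?_
    by_cases h1 : x i = s <;> simp [h1]
  simp_rw [h2]
  rw [Finset.sum_comm]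
  refine Finset.sum_congr rfl fun x _ => ?_
  simp

lemma davg_eq {C S H : Type*} [Fintype C] [Fintype S] [Fintype H]
    (PCS : C → S → ℝ) (PS : S → ℝ) (L : C → H → ℝ) (Q : S → H → ℝ) {n : ℕ} (hn : 0 < n)
    (code : (Fin n → S) → (Fin n → H)) :
    davgCode PCS PS L Q code = (1 / (n : ℝ)) * ∑ i : Fin n, ∑ x : Fin n → S,
      (∏ j, PS (x j)) * dd PCS PS L (x i) (code x i) - doff PCS L Q := by
  unfold davgCode
  simp_rw [dsem_eq, induced_sum]
  rw [Finset.sum_sub_distrib]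
  have : (n : ℝ) ≠ 0 := by positivity
  simp [dd, mul_sub]
  field_simp

/-- averaged rule -/
def qbar {S H : Type*} [Fintype S] (PS : S → ℝ) (Q : S → H → ℝ) {n : ℕ}
    (code : (Fin n → S) → (Fin n → H)) (s : S) (h : H) : ℝ :=
  if PS s = 0 then Q s h else (1 / (n : ℝ)) * ∑ i, inducedRule PS code i s h

lemma qbar_sum {S H : Type*} [Fintype S] [Fintype H] {PS : S → ℝ} (hPS : IsPMF PS)
    (Q : S → H → ℝ) {n : ℕ}
    (code : (Fin n → S) → (Fin n → H)) (F : S → H → ℝ) :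
    ∑ s, ∑ h, PS s * qbar PS Q code s h * F s h =
      (1 / (n : ℝ)) * ∑ i, ∑ x : Fin n → S, (∏ j, PS (x j)) * F (x i) (code x i) := by
  have h1 : ∀ s h, PS s * qbar PS Q code s h * F s h =
      (1 / (n : ℝ)) * ∑ i, inducedRule PS code i s h * (PS s * F s h) := by
    intro s h
    unfold qbar
    by_cases h0 : PS s = 0
    · simp [h0]
    · simp only [h0, if_false, Finset.mul_sum, Finset.sum_mul]
      refine Finset.sum_congr rfl fun i _ => ?_
      ring
  simp_rw [h1, ← Finset.mul_sum]
  congr 1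
  have h2 : ∀ s, ∑ h, ∑ i, inducedRule PS code i s h * (PS s * F s h) =
     ∑ i, ∑ h, inducedRule PS code i s h * (PS s * F s h) := fun s => Finset.sum_comm
  simp_rw [h2]
  rw [Finset.sum_comm]
  refine Finset.sum_congr rfl fun i _ => ?_
  rw [induced_sum PS code i (fun s h => PS s * F s h)]
  refine Finset.sum_congr rfl fun x _ => ?_
  by_cases h0 : PS (x i) = 0
  · rw [Finset.prod_eq_zero (Finset.mem_univ i) h0]; simp
  · field_simp

lemma qbar_rule {S H : Type*} [Fintype S] [Fintype H] {PS : S → ℝ} (hPS : IsPMF PS)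
    {Q : S → H → ℝ} (hQ : IsRule Q) {n : ℕ} (hn : 0 < n)
    (code : (Fin n → S) → (Fin n → H)) : IsRule (qbar PS Q code) := by
  intro s
  refine ⟨fun h => ?_, ?_⟩
  · unfold qbar
    split_ifs
    · exact (hQ s).1 h
    · refine mul_nonneg (by positivity) (Finset.sum_nonneg fun i _ => ?_)
      refine div_nonneg (Finset.sum_nonneg fun x _ => ?_) (hPS.1 s)
      split_ifs
      · exact Finset.prod_nonneg fun j _ => hPS.1 _
      · exact le_rfl
  · by_cases h0 : PS s = 0
    · simp only [qbar, h0, if_true]; exact (hQ s).2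
    · have h1 := qbar_sum hPS Q code (fun s' _ => if s' = s then 1 else 0)
      have h2 : ∀ i : Fin n, ∑ x : Fin n → S, (∏ j, PS (x j)) * (if x i = s then 1 else 0) = PS s := by
        intro i
        rw [sum_pn_marg hPS i (fun t => if t = s then 1 else 0)]
        simp
      simp_rw [h2] at h1
      have h3 : ∀ s', ∑ h, PS s' * qbar PS Q code s' h * (if s' = s then 1 else 0) =
         if s' = s then PS s * ∑ h, qbar PS Q code s h else 0 := by
        intro s'
        split_ifs with h
        · subst h; simp [Finset.mul_sum]
        · simp
      simp_rw [h3] at h1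
      have : (n : ℝ) ≠ 0 := by positivity
      simp at h1
      field_simp at h1
      exact h1

lemma dsem_qbar {C S H : Type*} [Fintype C] [Fintype S] [Fintype H]
    {PCS : C → S → ℝ} {PS : S → ℝ} (hPS : IsPMF PS) (h0 : ∀ s, PS s = 0 → ∀ c, PCS c s = 0)
    (L : C → H → ℝ) (Q : S → H → ℝ) {n : ℕ} (hn : 0 < n)
    (code : (Fin n → S) → (Fin n → H)) :
    dsem PCS L Q (qbar PS Q code) = davgCode PCS PS L Q code := by
  rw [davg_eq _ _ _ _ hn, dsem_eq, ← qbar_sum hPS Q code]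
  congr 1
  refine Finset.sum_congr rfl fun s _ => Finset.sum_congr rfl fun h _ => ?_
  by_cases hs : PS s = 0
  · simp [wloss, hs, h0 s hs]
  · unfold dd; field_simp

/-- output marginal -/
def omarg {S H : Type*} [Fintype S] (PS : S → ℝ) (Qt : S → H → ℝ) (h : H) : ℝ :=
  ∑ s', PS s' * Qt s' h

lemma omarg_ge {S H : Type*} [Fintype S] [Fintype H] {PS : S → ℝ} (hPS : IsPMF PS)
    {Qt : S → H → ℝ} (hQ : IsRule Qt) (s : S) (h : H) : PS s * Qt s h ≤ omarg PS Qt h :=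
  Finset.single_le_sum (f := fun s' => PS s' * Qt s' h)
    (fun s' _ => mul_nonneg (hPS.1 s') ((hQ s').1 h)) (Finset.mem_univ s)

lemma omarg_nonneg {S H : Type*} [Fintype S] [Fintype H] {PS : S → ℝ} (hPS : IsPMF PS)
    {Qt : S → H → ℝ} (hQ : IsRule Qt) (h : H) : 0 ≤ omarg PS Qt h :=
  Finset.sum_nonneg fun s' _ => mul_nonneg (hPS.1 s') ((hQ s').1 h)

lemma omarg_pmf {S H : Type*} [Fintype S] [Fintype H] {PS : S → ℝ} (hPS : IsPMF PS)
    {Qt : S → H → ℝ} (hQ : IsRule Qt) : IsPMF (omarg PS Qt) := by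
  refine ⟨omarg_nonneg hPS hQ, ?_⟩
  unfold omarg
  rw [Finset.sum_comm]
  simp_rw [← Finset.mul_sum, (hQ _).2]
  simp [hPS.2]

lemma converse_block {S H : Type*} [Fintype S] [Fintype H] {PS : S → ℝ} (hPS : IsPMF PS)
    {Q : S → H → ℝ} (hQ : IsRule Q) {n M : ℕ} (hn : 0 < n)
    (f : (Fin n → S) → Fin M) (g : Fin M → (Fin n → H)) (hM : 0 < M) :
    minfo PS (qbar PS Q (fun x => g (f x))) ≤ (1 / (n : ℝ)) * Real.logb 2 M := by
  set code : (Fin n → S) → (Fin n → H) := fun x => g (f x) with hcode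
  set W := qbar PS Q code with hW
  have hWr : IsRule W := qbar_rule hPS hQ hn code
  have hM' : (0 : ℝ) < M := by positivity
  have hl2 : (0 : ℝ) < Real.log 2 := Real.log_pos (by norm_num)
  have hpn : ∀ x : Fin n → S, 0 ≤ ∏ j, PS (x j) := fun x =>
    Finset.prod_nonneg fun j _ => hPS.1 _
  let Z : (Fin n → S) → (Fin n → H) → ℝ := fun x y => ∏ i, (W (x i) (y i) / omarg PS W (y i))
  have hZ0 : ∀ x y, 0 ≤ Z x y := fun x y =>
    Finset.prod_nonneg fun i _ => div_nonneg ((hWr _).1 _) (omarg_nonneg hPS hWr _)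
  have e1 : minfo PS W = (1 / (n : ℝ)) * ∑ x : Fin n → S, (∏ j, PS (x j)) *
      ∑ i, Real.logb 2 (W (x i) (code x i) / omarg PS W (code x i)) := by
    have := qbar_sum hPS Q code (fun s h => Real.logb 2 (W s h / omarg PS W h))
    simp_rw [Finset.mul_sum (s := (Finset.univ : Finset (Fin n)))]
    rw [show ∀ A : ℝ, (1 / (n:ℝ)) * A = (1 / (n:ℝ)) * A from fun _ => rfl, Finset.sum_comm]
    exact this
  have e2 : ∀ x : Fin n → S, (∏ j, PS (x j)) *
      ∑ i, Real.logb 2 (W (x i) (code x i) / omarg PS W (code x i)) ≤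
      (∏ j, PS (x j)) * ((Real.log M - 1) / Real.log 2) +
      ((∏ j, PS (x j)) * Z x (code x)) * (1 / M / Real.log 2) := by
    intro x
    rcases (hpn x).eq_or_lt with hx | hx
    · rw [← hx]; simp
    have hps : ∀ i, 0 < PS (x i) := fun i => (hPS.1 _).lt_of_ne' fun h =>
      hx.ne' (Finset.prod_eq_zero (Finset.mem_univ i) h)
    have hWp : ∀ i, 0 < W (x i) (code x i) := by
      intro i
      rw [hW]
      unfold qbar
      rw [if_neg (hps i).ne']
      refine mul_pos (by positivity) (Finset.sum_pos' (fun k _ => ?_) ⟨i, Finset.mem_univ i, ?_⟩)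
      · refine div_nonneg (Finset.sum_nonneg fun x _ => ?_) (hPS.1 _)
        split_ifs
        · exact hpn _
        · exact le_rfl
      · refine div_pos (Finset.sum_pos' (fun x _ => ?_) ⟨x, Finset.mem_univ x, ?_⟩) (hps i)
        · split_ifs
          · exact hpn _
          · exact le_rfl
        · simpa using hx
    have hop : ∀ i, 0 < omarg PS W (code x i) := fun i =>
      (mul_pos (hps i) (hWp i)).trans_le (omarg_ge hPS hWr _ _)
    have hZp : 0 < Z x (code x) := Finset.prod_pos fun i _ => div_pos (hWp i) (hop i)
    have hlog : ∑ i, Real.logb 2 (W (x i) (code x i) / omarg PS W (code x i)) =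
        Real.log (Z x (code x)) / Real.log 2 := by
      simp only [Real.logb, Z]
      rw [Real.log_prod (fun i _ => (div_pos (hWp i) (hop i)).ne'), Finset.sum_div]
    rw [hlog, mul_assoc, ← mul_add]
    refine mul_le_mul_of_nonneg_left ?_ hx.le
    have := Real.log_le_sub_one_of_pos (div_pos hZp hM')
    rw [Real.log_div hZp.ne' hM'.ne'] at this
    rw [← mul_div_assoc, ← add_div, div_le_div_iff_of_pos_right hl2]
    have h3 : Z x (code x) * (1 / M) = Z x (code x) / M := by ring
    rw [h3]; linarith
  have e3 : ∑ x : Fin n → S, (∏ j, PS (x j)) * Z x (code x) ≤ M := by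
    calc ∑ x : Fin n → S, (∏ j, PS (x j)) * Z x (code x)
        ≤ ∑ x : Fin n → S, ∑ m, (∏ j, PS (x j)) * Z x (g m) :=
          Finset.sum_le_sum fun x _ =>
            Finset.single_le_sum (f := fun m => (∏ j, PS (x j)) * Z x (g m))
              (fun m _ => mul_nonneg (hpn x) (hZ0 x _)) (Finset.mem_univ (f x))
      _ = ∑ m, ∑ x : Fin n → S, (∏ j, PS (x j)) * Z x (g m) := Finset.sum_comm
      _ ≤ ∑ m : Fin M, (1 : ℝ) := by
          refine Finset.sum_le_sum fun m _ => ?_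
          simp only [Z, ← Finset.prod_mul_distrib]
          rw [sum_prod_pi (fun i s => PS s * (W s (g m i) / omarg PS W (g m i)))]
          refine Finset.prod_le_one (fun i _ => Finset.sum_nonneg fun s _ => mul_nonneg (hPS.1 _)
            (div_nonneg ((hWr _).1 _) (omarg_nonneg hPS hWr _))) fun i _ => ?_
          simp_rw [← mul_div_assoc, ← Finset.sum_div]
          exact div_self_le_one (omarg PS W (g m i))
      _ = M := by simp
  rw [e1]
  refine mul_le_mul_of_nonneg_left ?_ (by positivity)
  refine (Finset.sum_le_sum fun x _ => e2 x).trans ?_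
  rw [Finset.sum_add_distrib, ← Finset.sum_mul, ← Finset.sum_mul, sum_pn_one hPS, Real.logb]
  have h4 : (∑ x : Fin n → S, (∏ j, PS (x j)) * Z x (code x)) * (1 / M / Real.log 2) ≤
     M * (1 / M / Real.log 2) := mul_le_mul_of_nonneg_right e3 (by positivity)
  have h5 : (M : ℝ) * (1 / M / Real.log 2) = 1 / Real.log 2 := by field_simp
  rw [h5] at h4
  calc _ ≤ 1 * ((Real.log M - 1) / Real.log 2) + 1 / Real.log 2 := by linarith
    _ = _ := by ring

lemma numMsg_pos (R : ℝ) (n : ℕ) : 0 < numMsg R n := Nat.ceil_pos.2 (by positivity)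

lemma logb_numMsg {R : ℝ} {n : ℕ} (hn : 0 < n) :
    (1 / (n : ℝ)) * Real.logb 2 (numMsg R n) ≤ max R 0 + 1 / n := by
  have hn' : (0 : ℝ) < n := by positivity
  have h1 : (numMsg R n : ℝ) ≤ 2 ^ ((n : ℝ) * max R 0 + 1) := by
    have h2 : (numMsg R n : ℝ) < 2 ^ ((n : ℝ) * R) + 1 := Nat.ceil_lt_add_one (by positivity)
    have h3 : (2 : ℝ) ^ ((n : ℝ) * R) ≤ 2 ^ ((n : ℝ) * max R 0) :=
      Real.rpow_le_rpow_of_exponent_le (by norm_num)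
        (mul_le_mul_of_nonneg_left (le_max_left _ _) hn'.le)
    have h4 : (1 : ℝ) ≤ 2 ^ ((n : ℝ) * max R 0) :=
      Real.one_le_rpow (by norm_num) (mul_nonneg hn'.le (le_max_right _ _))
    rw [Real.rpow_add (by norm_num), Real.rpow_one]
    linarith
  have h5 : Real.logb 2 (numMsg R n) ≤ (n : ℝ) * max R 0 + 1 := by
    rw [Real.logb_le_iff_le_rpow (by norm_num) (by exact_mod_cast numMsg_pos R n)]
    exact h1
  calc _ ≤ (1 / (n : ℝ)) * ((n : ℝ) * max R 0 + 1) :=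
        mul_le_mul_of_nonneg_left h5 (by positivity)
    _ = _ := by field_simp

lemma conv_ach {C S H : Type*} [Fintype C] [Fintype S] [Fintype H]
    {PCS : C → S → ℝ} {PS : S → ℝ} (hPS : IsPMF PS) (h0 : ∀ s, PS s = 0 → ∀ c, PCS c s = 0)
    (L : C → H → ℝ) {Q : S → H → ℝ} (hQ : IsRule Q) {R ε : ℝ}
    (hA : AchAvg PCS PS L Q R ε) {δ : ℝ} (hδ : 0 < δ) :
    ∃ Qt, IsRule Qt ∧ dsem PCS L Q Qt ≤ ε ∧ minfo PS Qt ≤ max R 0 + δ := by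
  obtain ⟨f, g, l, hl, hlt⟩ := hA
  have e1 := hl.eventually (gt_mem_nhds hlt)
  have e2 : ∀ᶠ n : ℕ in atTop, 1 / (n : ℝ) < δ :=
    tendsto_one_div_atTop_nhds_zero_nat.eventually (gt_mem_nhds hδ)
  obtain ⟨n, h1, h2, hn⟩ := (e1.and (e2.and (eventually_gt_atTop 0))).exists
  refine ⟨qbar PS Q (fun x => g n (f n x)), qbar_rule hPS hQ hn _, ?_, ?_⟩
  · rw [dsem_qbar hPS h0 L Q hn]; exact h1.le
  · have := converse_block hPS hQ hn (f n) (g n) (numMsg_pos R n)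
    have := logb_numMsg (R := R) hn
    linarith

/-- continuous form of the mutual information -/
def minfo' {S H : Type*} [Fintype S] [Fintype H]
    (PS : S → ℝ) (Qt : S → H → ℝ) : ℝ :=
  (∑ s, ∑ h, PS s * (Qt s h * Real.log (Qt s h)) -
    ∑ h, omarg PS Qt h * Real.log (omarg PS Qt h)) / Real.log 2

lemma minfo_eq {S H : Type*} [Fintype S] [Fintype H] {PS : S → ℝ} (hPS : IsPMF PS)
    {Qt : S → H → ℝ} (hQ : IsRule Qt) : minfo PS Qt = minfo' PS Qt := by
  have h1 : ∀ h, omarg PS Qt h * Real.log (omarg PS Qt h) =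
      ∑ s, PS s * Qt s h * Real.log (omarg PS Qt h) := by
    intro h
    rw [← Finset.sum_mul]; rfl
  unfold minfo minfo'
  simp_rw [h1]
  rw [Finset.sum_comm (γ := H), ← Finset.sum_sub_distrib, Finset.sum_div]
  refine Finset.sum_congr rfl fun s _ => ?_
  rw [← Finset.sum_sub_distrib, Finset.sum_div]
  refine Finset.sum_congr rfl fun h _ => ?_
  change PS s * Qt s h * Real.logb 2 (Qt s h / omarg PS Qt h) = _
  rcases (mul_nonneg (hPS.1 s) ((hQ s).1 h)).eq_or_lt with h2 | h2
  · rw [← mul_assoc, ← h2]; simp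
  · have h3 := h2.trans_le (omarg_ge hPS hQ s h)
    have h4 : Qt s h ≠ 0 := fun h => by simp [h] at h2
    rw [Real.logb, Real.log_div h4 h3.ne']
    ring

lemma minfo'_cont {S H : Type*} [Fintype S] [Fintype H] (PS : S → ℝ) :
    Continuous (minfo' PS : (S → H → ℝ) → ℝ) := by
  have h1 : ∀ h : H, Continuous fun Qt : S → H → ℝ => omarg PS Qt h := by
    intro h; unfold omarg; fun_prop
  have h2 := Real.continuous_mul_log
  unfold minfo'
  refine Continuous.div_const (Continuous.sub ?_ ?_) _
  · refine continuous_finsetSum _ fun s _ => continuous_finsetSum _ fun h _ => ?_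
    exact continuous_const.mul (h2.comp (f := fun Qt : S → H → ℝ => Qt s h) (by fun_prop))
  · refine continuous_finsetSum _ fun h _ => ?_
    exact h2.comp (h1 h)

lemma dsem_cont {C S H : Type*} [Fintype C] [Fintype S] [Fintype H]
    (PCS : C → S → ℝ) (L : C → H → ℝ) (Q : S → H → ℝ) :
    Continuous (fun Qt => dsem PCS L Q Qt) := by
  unfold dsem trueLoss; fun_prop

lemma rules_compact {S H : Type*} [Fintype H] :
    IsCompact {Qt : S → H → ℝ | IsRule Qt} := by
  have : {Qt : S → H → ℝ | IsRule Qt} = Set.univ.pi fun _ => stdSimplex ℝ H := by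
    ext Qt
    simp [IsRule, IsPMF, stdSimplex, Set.mem_pi]
  rw [this]
  exact isCompact_univ_pi fun _ => isCompact_stdSimplex ℝ H

lemma limit_rule {C S H : Type*} [Fintype C] [Fintype S] [Fintype H]
    {PCS : C → S → ℝ} {PS : S → ℝ} (hPS : IsPMF PS)
    (L : C → H → ℝ) {Q : S → H → ℝ} {r ε : ℝ}
    (hA : ∀ δ > 0, ∃ Qt, IsRule Qt ∧ dsem PCS L Q Qt ≤ ε + δ ∧ minfo PS Qt ≤ r + δ) :
    ∃ Qt, IsRule Qt ∧ dsem PCS L Q Qt ≤ ε ∧ minfo PS Qt ≤ r := by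
  have hpos : ∀ k : ℕ, (0 : ℝ) < 1 / ((k : ℝ) + 1) := fun k => by positivity
  choose u hu1 hu2 hu3 using fun k : ℕ => hA _ (hpos k)
  obtain ⟨Qt, hQt, φ, hφ, hlim⟩ := rules_compact.tendsto_subseq (x := u) hu1
  have hz : Tendsto (fun k => 1 / ((φ k : ℝ) + 1)) atTop (nhds 0) :=
    tendsto_one_div_add_atTop_nhds_zero_nat.comp hφ.tendsto_atTop
  refine ⟨Qt, hQt, ?_, ?_⟩
  · have t1 := ((dsem_cont PCS L Q).tendsto Qt).comp hlim
    have t2 := hz.const_add ε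
    rw [add_zero] at t2
    exact le_of_tendsto_of_tendsto' t1 t2 fun k => hu2 (φ k)
  · have t1 := ((minfo'_cont PS).tendsto Qt).comp hlim
    have t2 := hz.const_add r
    rw [add_zero] at t2
    rw [minfo_eq hPS hQt]
    refine le_of_tendsto_of_tendsto' t1 t2 fun k => ?_
    have := hu3 (φ k)
    rw [minfo_eq hPS (hu1 _)] at this
    exact this

lemma minfo_nonneg {S H : Type*} [Fintype S] [Fintype H] {PS : S → ℝ} (hPS : IsPMF PS)
    {Qt : S → H → ℝ} (hQ : IsRule Qt) : 0 ≤ minfo PS Qt := by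
  have hl2 : (0 : ℝ) < Real.log 2 := Real.log_pos (by norm_num)
  have h1 : ∀ s h, (PS s * Qt s h - PS s * omarg PS Qt h) / Real.log 2 ≤
      PS s * Qt s h * Real.logb 2 (Qt s h / omarg PS Qt h) := by
    intro s h
    rw [Real.logb, ← mul_div_assoc, div_le_div_iff_of_pos_right hl2]
    rcases (mul_nonneg (hPS.1 s) ((hQ s).1 h)).eq_or_lt with h2 | h2
    · rw [← h2]
      have := mul_nonneg (hPS.1 s) (omarg_nonneg hPS hQ h)
      linarith
    · have h3 := h2.trans_le (omarg_ge hPS hQ s h)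
      have h4 : 0 < Qt s h := ((hQ s).1 h).lt_of_ne' fun h => by simp [h] at h2
      have h5 := Real.one_sub_inv_le_log_of_pos (div_pos h4 h3)
      have h6 := mul_le_mul_of_nonneg_left h5 h2.le
      refine le_trans (le_of_eq ?_) h6
      rw [inv_div]
      field_simp
  have h2 := Finset.sum_le_sum fun s (_ : s ∈ Finset.univ) =>
    Finset.sum_le_sum fun h (_ : h ∈ Finset.univ) => h1 s h
  refine le_trans (le_of_eq ?_) h2
  simp_rw [← Finset.sum_div, Finset.sum_sub_distrib, ← Finset.mul_sum, (hQ _).2,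
    (omarg_pmf hPS hQ).2]
  simp

/-- Random covering lemma. -/
lemma covering {X Y : Type*} [Fintype X] [Fintype Y] {p : X → ℝ} (hp : IsPMF p)
    {q : Y → ℝ} (hq : IsPMF q) {W : X → Y → ℝ} (hW : IsRule W) (T : X → Y → Prop)
    {K : ℝ} (hK : 0 < K) (hT : ∀ x y, T x y → W x y ≤ K * q y) (M : ℕ) :
    ∃ cb : Fin M → Y, ∑ x, p x * (if ∀ m, ¬ T x (cb m) then 1 else 0) ≤
      ∑ x, ∑ y, p x * W x y * (if T x y then 0 else 1) + Real.exp (-(M / K)) := by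
  let wt : (Fin M → Y) → ℝ := fun cb => ∏ m, q (cb m)
  have hwt : ∀ cb, 0 ≤ wt cb := fun cb => Finset.prod_nonneg fun m _ => hq.1 _
  have hwt1 : ∑ cb, wt cb = 1 := sum_pn_one hq
  set B := ∑ x, ∑ y, p x * W x y * (if T x y then 0 else 1) + Real.exp (-(M / K)) with hB
  by_contra hcon
  push Not at hcon
  have key : ∑ cb, wt cb * ∑ x, p x * (if ∀ m, ¬ T x (cb m) then 1 else 0) ≤ B := by
    simp_rw [Finset.mul_sum]
    rw [Finset.sum_comm]
    have hx : ∀ x, ∑ cb, wt cb * (p x * (if ∀ m, ¬ T x (cb m) then 1 else 0)) ≤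
        p x * (∑ y, W x y * (if T x y then 0 else 1) + Real.exp (-(M / K))) := by
      intro x
      have e1 : ∀ cb : Fin M → Y, wt cb * (p x * (if ∀ m, ¬ T x (cb m) then 1 else 0)) =
          p x * ∏ m, (q (cb m) * if T x (cb m) then 0 else 1) := by
        intro cb
        rw [Finset.prod_mul_distrib]
        by_cases h : ∀ m, ¬ T x (cb m)
        · simp [h, wt]; ring
        · rw [if_neg h]
          push Not at h
          obtain ⟨m, hm⟩ := h
          rw [Finset.prod_eq_zero (f := fun m => if T x (cb m) then (0 : ℝ) else 1)
            (Finset.mem_univ m) (by simp [hm])]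
          simp
      simp_rw [e1]
      rw [← Finset.mul_sum, sum_prod_pi (fun _ y => q y * if T x y then 0 else 1)]
      refine mul_le_mul_of_nonneg_left ?_ (hp.1 x)
      rw [Finset.prod_const, Finset.card_univ, Fintype.card_fin]
      set a := ∑ y, W x y * (if T x y then 1 else 0) with ha
      have hsum : ∀ v : Y → ℝ, ∑ y, v y * (if T x y then 0 else 1) =
          ∑ y, v y - ∑ y, v y * (if T x y then 1 else 0) := by
        intro v
        rw [← Finset.sum_sub_distrib]
        refine Finset.sum_congr rfl fun y _ => ?_
        split_ifs <;> ring
      rw [hsum, hsum, hq.2, (hW x).2, ← ha]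
      have ha0 : 0 ≤ a := Finset.sum_nonneg fun y _ => mul_nonneg ((hW x).1 y)
        (by split_ifs <;> norm_num)
      have ha1 : a ≤ 1 := by
        rw [← (hW x).2]
        refine Finset.sum_le_sum fun y _ => ?_
        have := (hW x).1 y
        split_ifs <;> linarith
      set b := ∑ y, q y * (if T x y then 1 else 0) with hb
      have hb1 : b ≤ 1 := by
        rw [← hq.2]
        refine Finset.sum_le_sum fun y _ => ?_
        have := hq.1 y
        split_ifs <;> linarith
      have hab : a ≤ K * b := by
        rw [ha, hb, Finset.mul_sum]
        refine Finset.sum_le_sum fun y _ => ?_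
        split_ifs with h
        · have := hT x y h; linarith
        · simp
      have hab' : a / K ≤ b := by rw [div_le_iff₀ hK]; linarith
      have c1 : (1 - b) ^ M ≤ Real.exp (-(a * (M / K))) := by
        calc (1 - b) ^ M ≤ (Real.exp (-b)) ^ M :=
              pow_le_pow_left₀ (by linarith) (Real.one_sub_le_exp_neg b) M
          _ = Real.exp (M * (-b)) := by rw [← Real.exp_nat_mul]
          _ ≤ _ := by
            apply Real.exp_le_exp.2
            have := mul_le_mul_of_nonneg_left hab' (Nat.cast_nonneg (α := ℝ) M)
            have e : a * (M / K) = M * (a / K) := by ring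
            rw [e]; linarith
      have c2 : Real.exp (-(a * (M / K))) ≤ (1 - a) + a * Real.exp (-(M / K)) := by
        have := convexOn_exp.2 (Set.mem_univ 0) (Set.mem_univ (-(M / K)))
          (sub_nonneg.2 ha1) ha0 (by ring)
        simpa using this
      have c3 : a * Real.exp (-(M / K)) ≤ Real.exp (-(M / K)) := by
        have := (Real.exp_pos (-(M / K))).le
        nlinarith
      linarith
    refine (Finset.sum_le_sum fun x _ => hx x).trans (le_of_eq ?_)
    simp_rw [mul_add]
    rw [Finset.sum_add_distrib, ← Finset.sum_mul, hp.2, hB, one_mul]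
    congr 1
    refine Finset.sum_congr rfl fun x _ => ?_
    rw [Finset.mul_sum]
    refine Finset.sum_congr rfl fun y _ => ?_
    ring
  have h2 : B < ∑ cb, wt cb * ∑ x, p x * (if ∀ m, ¬ T x (cb m) then 1 else 0) := by
    have e : B = ∑ cb, wt cb * B := by rw [← Finset.sum_mul, hwt1, one_mul]
    rw [e]
    obtain ⟨cb0, -, hcb0⟩ : ∃ cb ∈ Finset.univ, wt cb ≠ 0 :=
      Finset.exists_ne_zero_of_sum_ne_zero (by rw [hwt1]; norm_num)
    refine Finset.sum_lt_sum (fun cb _ => mul_le_mul_of_nonneg_left (hcon cb).le (hwt cb))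
      ⟨cb0, Finset.mem_univ _, ?_⟩
    exact mul_lt_mul_of_pos_left (hcon cb0) ((hwt cb0).lt_of_ne' hcb0)
  linarith

/-- Chernoff bound for product pmfs. -/
lemma chernoff {S H : Type*} [Fintype S] [Fintype H] {PS : S → ℝ} (hPS : IsPMF PS)
    {Qt : S → H → ℝ} (hQ : IsRule Qt) (φ : S → H → ℝ) {μ η : ℝ} (hη : 0 < η)
    (hμ : ∑ s, ∑ h, PS s * Qt s h * φ s h = μ) :
    ∃ r : ℝ, 0 ≤ r ∧ r < 1 ∧ ∀ n : ℕ,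
      ∑ x : Fin n → S, ∑ y : Fin n → H, (∏ j, PS (x j)) * (∏ j, Qt (x j) (y j)) *
        (if (n : ℝ) * (μ + η) < ∑ j, φ (x j) (y j) then 1 else 0) ≤ r ^ n := by
  obtain ⟨B, hB1, hB⟩ : ∃ B : ℝ, 1 ≤ B ∧ ∀ s h, |φ s h - μ| ≤ B := by
    refine ⟨1 + ∑ s, ∑ h, |φ s h - μ|, ?_, ?_⟩
    · have : 0 ≤ ∑ s, ∑ h, |φ s h - μ| :=
        Finset.sum_nonneg fun s _ => Finset.sum_nonneg fun h _ => abs_nonneg _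
      linarith
    · intro s h
      have h1 : |φ s h - μ| ≤ ∑ h, |φ s h - μ| :=
        Finset.single_le_sum (f := fun h => |φ s h - μ|) (fun _ _ => abs_nonneg _)
          (Finset.mem_univ h)
      have h2 : ∑ h, |φ s h - μ| ≤ ∑ s, ∑ h, |φ s h - μ| :=
        Finset.single_le_sum (f := fun s => ∑ h, |φ s h - μ|)
          (fun _ _ => Finset.sum_nonneg fun h _ => abs_nonneg _) (Finset.mem_univ s)
      linarith
  have hJ1 : ∑ s, ∑ h, PS s * Qt s h = 1 := by
    simp_rw [← Finset.mul_sum, (hQ _).2]; simp [hPS.2]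
  have hJ0 : ∀ s h, 0 ≤ PS s * Qt s h := fun s h => mul_nonneg (hPS.1 s) ((hQ s).1 h)
  obtain ⟨t, ht0, htB, htη⟩ : ∃ t : ℝ, 0 < t ∧ t * B ≤ 1 ∧ t * B ^ 2 < η := by
    have hB0 : 0 < B := by linarith
    refine ⟨min (1 / B) (η / (2 * B ^ 2)), by positivity, ?_, ?_⟩
    · calc _ ≤ 1 / B * B := mul_le_mul_of_nonneg_right (min_le_left _ _) hB0.le
        _ = 1 := by field_simp
    · calc _ ≤ η / (2 * B ^ 2) * B ^ 2 :=
            mul_le_mul_of_nonneg_right (min_le_right _ _) (by positivity)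
        _ = η / 2 := by field_simp
        _ < η := by linarith
  let ψ : S → H → ℝ := fun s h => Real.exp (t * (φ s h - μ - η))
  let r := ∑ s, ∑ h, PS s * Qt s h * ψ s h
  have hr0 : 0 ≤ r := Finset.sum_nonneg fun s _ => Finset.sum_nonneg fun h _ =>
    mul_nonneg (hJ0 s h) (Real.exp_pos _).le
  have hr1 : r < 1 := by
    have h1 : ∀ s h, ψ s h ≤ (1 + t * (φ s h - μ) + t ^ 2 * B ^ 2) * Real.exp (-(t * η)) := by
      intro s h
      have e : ψ s h = Real.exp (t * (φ s h - μ)) * Real.exp (-(t * η)) := by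
        simp only [ψ]; rw [← Real.exp_add]; congr 1; ring
      rw [e]
      refine mul_le_mul_of_nonneg_right ?_ (Real.exp_pos _).le
      have h2 : |t * (φ s h - μ)| ≤ t * B := by
        rw [abs_mul, abs_of_pos ht0]
        exact mul_le_mul_of_nonneg_left (hB s h) ht0.le
      have h3 := Real.abs_exp_sub_one_sub_id_le (h2.trans htB)
      have h4 := (abs_le.1 h3).2
      have h5 : (t * (φ s h - μ)) ^ 2 ≤ (t * B) ^ 2 := by
        rw [← sq_abs]; exact pow_le_pow_left₀ (abs_nonneg _) h2 2
      nlinarith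
    have h2 : r ≤ (1 + t ^ 2 * B ^ 2) * Real.exp (-(t * η)) := by
      calc r ≤ ∑ s, ∑ h, PS s * Qt s h *
            ((1 + t * (φ s h - μ) + t ^ 2 * B ^ 2) * Real.exp (-(t * η))) :=
            Finset.sum_le_sum fun s _ => Finset.sum_le_sum fun h _ =>
              mul_le_mul_of_nonneg_left (h1 s h) (hJ0 s h)
        _ = ∑ s, ∑ h, ((PS s * Qt s h) * ((1 - t * μ + t ^ 2 * B ^ 2) * Real.exp (-(t * η))) +
            PS s * Qt s h * φ s h * (t * Real.exp (-(t * η)))) := by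
            refine Finset.sum_congr rfl fun s _ => Finset.sum_congr rfl fun h _ => ?_
            ring
        _ = _ := by
            simp_rw [Finset.sum_add_distrib, ← Finset.sum_mul]
            rw [hJ1, hμ]; ring
    have h3 : 1 + t ^ 2 * B ^ 2 < Real.exp (t * η) := by
      have := Real.add_one_le_exp (t * η)
      have : t * (t * B ^ 2) < t * η := mul_lt_mul_of_pos_left htη ht0
      nlinarith
    calc r ≤ _ := h2
      _ < Real.exp (t * η) * Real.exp (-(t * η)) :=
          mul_lt_mul_of_pos_right h3 (Real.exp_pos _)
      _ = 1 := by rw [← Real.exp_add]; simp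
  refine ⟨r, hr0, hr1, fun n => ?_⟩
  have h1 : ∀ (x : Fin n → S) (y : Fin n → H), (∏ j, PS (x j)) * (∏ j, Qt (x j) (y j)) *
        (if (n : ℝ) * (μ + η) < ∑ j, φ (x j) (y j) then 1 else 0) ≤
        ∏ j, (PS (x j) * Qt (x j) (y j) * ψ (x j) (y j)) := by
    intro x y
    rw [Finset.prod_mul_distrib, Finset.prod_mul_distrib]
    refine mul_le_mul_of_nonneg_left ?_ (mul_nonneg (Finset.prod_nonneg fun j _ => hPS.1 _)
      (Finset.prod_nonneg fun j _ => (hQ _).1 _))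
    simp only [ψ]
    rw [← Real.exp_sum]
    split_ifs with h
    · apply Real.one_le_exp
      rw [← Finset.mul_sum]
      refine mul_nonneg ht0.le ?_
      simp_rw [sub_sub]
      rw [Finset.sum_sub_distrib]
      simp
      linarith
    · exact (Real.exp_pos _).le
  refine (Finset.sum_le_sum fun x _ => Finset.sum_le_sum fun y _ => h1 x y).trans (le_of_eq ?_)
  have h2 : ∀ x : Fin n → S, ∑ y : Fin n → H, ∏ j, (PS (x j) * Qt (x j) (y j) * ψ (x j) (y j)) =
      ∏ j, ∑ h, PS (x j) * Qt (x j) h * ψ (x j) h := fun x =>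
    sum_prod_pi (fun j h => PS (x j) * Qt (x j) h * ψ (x j) h)
  simp_rw [h2]
  rw [sum_prod_pi (fun _ s => ∑ h, PS s * Qt s h * ψ s h)]
  simp [r]

lemma ach_block {S H : Type*} [Fintype S] [Fintype H] {PS : S → ℝ} (hPS : IsPMF PS)
    {Qt : S → H → ℝ} (hQ : IsRule Qt) (d : S → H → ℝ) (hd0 : ∀ s h, 0 ≤ d s h)
    (hd1 : ∀ s h, d s h ≤ 1) {η : ℝ} (hη : 0 < η) :
    ∀ᶠ n : ℕ in atTop, ∃ (f : (Fin n → S) → Fin (numMsg (minfo PS Qt + 2 * η) n))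
      (g : Fin (numMsg (minfo PS Qt + 2 * η) n) → (Fin n → H)),
      (1 / (n : ℝ)) * ∑ i, ∑ x : Fin n → S, (∏ j, PS (x j)) * d (x i) (g (f x) i) ≤
        ∑ s, ∑ h, PS s * Qt s h * d s h + 2 * η := by
  set I := minfo PS Qt with hI
  set t := ∑ s, ∑ h, PS s * Qt s h * d s h with ht
  set R := I + 2 * η with hR
  have ht0 : 0 ≤ t := Finset.sum_nonneg fun s _ => Finset.sum_nonneg fun h _ =>
    mul_nonneg (mul_nonneg (hPS.1 s) ((hQ s).1 h)) (hd0 s h)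
  obtain ⟨r1, hr10, hr11, hr1⟩ := chernoff hPS hQ
    (fun s h => Real.logb 2 (Qt s h / omarg PS Qt h)) hη hI.symm
  obtain ⟨r2, hr20, hr21, hr2⟩ := chernoff hPS hQ d hη ht.symm
  have l1 := tendsto_pow_atTop_nhds_zero_of_lt_one hr10 hr11
  have l2 := tendsto_pow_atTop_nhds_zero_of_lt_one hr20 hr21
  have l3 : Tendsto (fun n : ℕ => Real.exp (-((2 : ℝ) ^ ((n : ℝ) * η)))) atTop (nhds 0) := by
    refine Real.tendsto_exp_neg_atTop_nhds_zero.comp ?_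
    exact (tendsto_rpow_atTop_of_base_gt_one 2 (by norm_num)).comp
      ((tendsto_natCast_atTop_atTop (R := ℝ)).atTop_mul_const hη)
  have l4 := (l1.add l2).add l3
  simp only [add_zero] at l4
  filter_upwards [l4.eventually (gt_mem_nhds hη), eventually_gt_atTop 0] with n hsmall hn
  have hn' : (0 : ℝ) < n := by positivity
  have hpn : ∀ x : Fin n → S, 0 ≤ ∏ j, PS (x j) := fun x =>
    Finset.prod_nonneg fun j _ => hPS.1 _
  have hWn : ∀ (x : Fin n → S) (y : Fin n → H), 0 ≤ ∏ j, Qt (x j) (y j) := fun x y =>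
    Finset.prod_nonneg fun j _ => (hQ _).1 _
  let K : ℝ := 2 ^ ((n : ℝ) * (I + η))
  have hK : 0 < K := by positivity
  obtain ⟨T, hTd⟩ : ∃ T : (Fin n → S) → (Fin n → H) → Prop, ∀ x y, T x y ↔
      (∏ j, Qt (x j) (y j) ≤ K * ∏ j, omarg PS Qt (y j) ∧
        ∑ j, d (x j) (y j) ≤ n * (t + η)) := ⟨_, fun _ _ => Iff.rfl⟩
  obtain ⟨cb, hcb⟩ := covering (p := fun x : Fin n → S => ∏ j, PS (x j))
    (q := fun y : Fin n → H => ∏ j, omarg PS Qt (y j))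
    (W := fun (x : Fin n → S) (y : Fin n → H) => ∏ j, Qt (x j) (y j))
    ⟨hpn, sum_pn_one hPS⟩
    ⟨fun y => Finset.prod_nonneg fun j _ => omarg_nonneg hPS hQ _, sum_pn_one (omarg_pmf hPS hQ)⟩
    (fun x => ⟨hWn x, by
      rw [sum_prod_pi (fun j h => Qt (x j) h)]
      simp [(hQ _).2]⟩)
    T hK (fun x y h => ((hTd x y).1 h).1) (numMsg R n)
  have hMK : (2 : ℝ) ^ ((n : ℝ) * η) ≤ (numMsg R n : ℝ) / K := by
    rw [le_div_iff₀ hK]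
    refine le_trans (le_of_eq ?_) (Nat.le_ceil _)
    simp only [K]
    rw [← Real.rpow_add (by norm_num)]
    congr 1
    rw [hR]; ring
  have hfail1 : ∑ x : Fin n → S, ∑ y : Fin n → H, (∏ j, PS (x j)) * (∏ j, Qt (x j) (y j)) *
      (if T x y then 0 else 1) ≤ r1 ^ n + r2 ^ n := by
    refine le_trans ?_ (add_le_add (hr1 n) (hr2 n))
    rw [← Finset.sum_add_distrib]
    refine Finset.sum_le_sum fun x _ => ?_
    rw [← Finset.sum_add_distrib]
    refine Finset.sum_le_sum fun y _ => ?_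
    rw [← mul_add]
    rcases (mul_nonneg (hpn x) (hWn x y)).eq_or_lt with h0 | h0
    · rw [← h0]; simp
    refine mul_le_mul_of_nonneg_left ?_ h0.le
    by_cases hT : T x y
    · rw [if_pos hT]
      refine add_nonneg ?_ ?_ <;> split_ifs <;> norm_num
    rw [if_neg hT]
    by_cases h2 : (n : ℝ) * (t + η) < ∑ j, d (x j) (y j)
    · rw [if_pos h2]
      have : (0 : ℝ) ≤ if (n : ℝ) * (I + η) <
        ∑ j, Real.logb 2 (Qt (x j) (y j) / omarg PS Qt (y j)) then 1 else 0 := by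
        split_ifs <;> norm_num
      linarith
    have h3 : K * ∏ j, omarg PS Qt (y j) < ∏ j, Qt (x j) (y j) := by
      by_contra h3
      exact hT ((hTd x y).2 ⟨not_lt.1 h3, not_lt.1 h2⟩)
    have hps : ∀ j, 0 < PS (x j) := fun j => (hPS.1 _).lt_of_ne' fun h =>
      h0.ne' (by rw [Finset.prod_eq_zero (Finset.mem_univ j) h, zero_mul])
    have hqp : ∀ j, 0 < Qt (x j) (y j) := fun j => ((hQ _).1 _).lt_of_ne' fun h =>
      h0.ne' (by rw [Finset.prod_eq_zero (f := fun j => Qt (x j) (y j)) (Finset.mem_univ j) h,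
        mul_zero])
    have hop : ∀ j, 0 < omarg PS Qt (y j) := fun j =>
      (mul_pos (hps j) (hqp j)).trans_le (omarg_ge hPS hQ _ _)
    have hopp : 0 < ∏ j, omarg PS Qt (y j) := Finset.prod_pos fun j _ => hop j
    have hlog : ∑ j, Real.logb 2 (Qt (x j) (y j) / omarg PS Qt (y j)) =
        Real.logb 2 (∏ j, (Qt (x j) (y j) / omarg PS Qt (y j))) := by
      simp only [Real.logb]
      rw [Real.log_prod (fun i _ => (div_pos (hqp i) (hop i)).ne'), Finset.sum_div]
    have h4 : (n : ℝ) * (I + η) < ∑ j, Real.logb 2 (Qt (x j) (y j) / omarg PS Qt (y j)) := by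
      rw [hlog, Real.lt_logb_iff_rpow_lt (by norm_num)
        (Finset.prod_pos fun j _ => div_pos (hqp j) (hop j)), Finset.prod_div_distrib,
        lt_div_iff₀ hopp]
      exact h3
    rw [if_pos h4]
    have : (0 : ℝ) ≤ if (n : ℝ) * (t + η) < ∑ j, d (x j) (y j) then 1 else 0 := by
      split_ifs <;> norm_num
    linarith
  have hfail : ∑ x : Fin n → S, (∏ j, PS (x j)) * (if ∀ m, ¬ T x (cb m) then 1 else 0) ≤ η := by
    have h5 : Real.exp (-((numMsg R n : ℝ) / K)) ≤ Real.exp (-((2 : ℝ) ^ ((n : ℝ) * η))) :=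
      Real.exp_le_exp.2 (by linarith)
    refine hcb.trans ?_
    linarith
  let f : (Fin n → S) → Fin (numMsg R n) := fun x =>
    if h : ∃ m, T x (cb m) then h.choose else ⟨0, numMsg_pos R n⟩
  refine ⟨f, cb, ?_⟩
  rw [Finset.sum_comm]
  have hx : ∀ x : Fin n → S, ∑ i, (∏ j, PS (x j)) * d (x i) (cb (f x) i) ≤
      n * ((∏ j, PS (x j)) * (t + η) +
        (∏ j, PS (x j)) * (if ∀ m, ¬ T x (cb m) then 1 else 0)) := by
    intro x
    rw [← Finset.mul_sum, ← mul_add, mul_left_comm]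
    refine mul_le_mul_of_nonneg_left ?_ (hpn x)
    by_cases h : ∃ m, T x (cb m)
    · have hf : T x (cb (f x)) := by
        simp only [f, dif_pos h]; exact h.choose_spec
      rw [if_neg (by push Not; exact h), add_zero]
      exact ((hTd _ _).1 hf).2
    · rw [if_pos (by push Not at h; exact h)]
      calc ∑ i, d (x i) (cb (f x) i) ≤ ∑ i : Fin n, (1 : ℝ) :=
            Finset.sum_le_sum fun i _ => hd1 _ _
        _ = n * 1 := by simp
        _ ≤ _ := mul_le_mul_of_nonneg_left (by linarith) hn'.le
  calc _ ≤ (1 / (n : ℝ)) * ∑ x : Fin n → S, n * ((∏ j, PS (x j)) * (t + η) +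
        (∏ j, PS (x j)) * (if ∀ m, ¬ T x (cb m) then 1 else 0)) :=
        mul_le_mul_of_nonneg_left (Finset.sum_le_sum fun x _ => hx x) (by positivity)
    _ = (t + η) + ∑ x : Fin n → S, (∏ j, PS (x j)) * (if ∀ m, ¬ T x (cb m) then 1 else 0) := by
        rw [← Finset.mul_sum, Finset.sum_add_distrib, ← Finset.sum_mul, sum_pn_one hPS]
        field_simp
    _ ≤ _ := by linarith

lemma discrete_ivt (v : ℕ → ℝ) {τ e : ℝ} {n : ℕ} (h0 : v 0 ≤ τ) (hn : τ ≤ v n)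
    (he : ∀ k, |v (k + 1) - v k| ≤ e) : ∃ k, |v k - τ| ≤ e := by
  have hex : ∃ k, τ ≤ v k := ⟨n, hn⟩
  have he0 : 0 ≤ e := (abs_nonneg _).trans (he 0)
  have hs := Nat.find_spec hex
  rcases hk : Nat.find hex with _ | k
  · rw [hk] at hs
    refine ⟨0, ?_⟩
    rw [le_antisymm h0 hs]; simpa using he0
  · have hm := Nat.find_min hex (m := k) (by omega)
    rw [hk] at hs
    refine ⟨k, ?_⟩
    have := abs_le.1 (he k)
    rw [abs_le]; constructor <;> linarith

lemma interp {S H : Type*} [Fintype S] [Fintype H] {PS : S → ℝ} (hPS : IsPMF PS)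
    (d : S → H → ℝ) (hd0 : ∀ s h, 0 ≤ d s h)
    (hd1 : ∀ s h, d s h ≤ 1) {τ : ℝ} {n M : ℕ} (hn : 0 < n)
    (f : (Fin n → S) → Fin M) (g : Fin M → (Fin n → H)) (h0 : H)
    (hτ : τ ≤ ∑ s, PS s * d s h0)
    (hg : (1 / (n : ℝ)) * ∑ i, ∑ x : Fin n → S, (∏ j, PS (x j)) * d (x i) (g (f x) i) ≤ τ) :
    ∃ g' : Fin M → (Fin n → H),
      |(1 / (n : ℝ)) * ∑ i, ∑ x : Fin n → S, (∏ j, PS (x j)) * d (x i) (g' (f x) i) - τ| ≤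
        1 / n := by
  have hn' : (0 : ℝ) < n := by positivity
  let gk : ℕ → Fin M → (Fin n → H) := fun k m i => if i.val < k then h0 else g m i
  let a : Fin n → ℝ := fun i => ∑ x : Fin n → S, (∏ j, PS (x j)) * d (x i) (g (f x) i)
  let c0 := ∑ s, PS s * d s h0
  let v : ℕ → ℝ := fun k => (1 / (n : ℝ)) * ∑ i : Fin n, (if i.val < k then c0 else a i)
  have hpn : ∀ x : Fin n → S, 0 ≤ ∏ j, PS (x j) := fun x =>
    Finset.prod_nonneg fun j _ => hPS.1 _
  have hv : ∀ k, (1 / (n : ℝ)) * ∑ i, ∑ x : Fin n → S, (∏ j, PS (x j)) *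
      d (x i) (gk k (f x) i) = v k := by
    intro k
    simp only [v]
    congr 1
    refine Finset.sum_congr rfl fun i _ => ?_
    by_cases h : i.val < k
    · simp only [gk, h, if_true]
      exact sum_pn_marg hPS i (fun s => d s h0)
    · simp only [gk, h, if_false, a]
  have ha0 : ∀ i, 0 ≤ a i := fun i => Finset.sum_nonneg fun x _ => mul_nonneg (hpn x) (hd0 _ _)
  have ha1 : ∀ i, a i ≤ 1 := fun i => by
    rw [← sum_pn_one (n := n) hPS]
    exact Finset.sum_le_sum fun x _ => mul_le_of_le_one_right (hpn x) (hd1 _ _)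
  have hc0 : 0 ≤ c0 := Finset.sum_nonneg fun x _ => mul_nonneg (hPS.1 x) (hd0 _ _)
  have hc1 : c0 ≤ 1 := by
    rw [← hPS.2]
    exact Finset.sum_le_sum fun x _ => mul_le_of_le_one_right (hPS.1 x) (hd1 _ _)
  obtain ⟨k, hk⟩ := discrete_ivt v (τ := τ) (e := 1 / n) (n := n)
    (by simpa [v, a] using hg)
    (by
      have : v n = c0 := by
        simp only [v, Fin.is_lt, if_true]
        simp
        field_simp
      rw [this]; exact hτ)
    (by
      intro k
      simp only [v]
      rw [← mul_sub, ← Finset.sum_sub_distrib, abs_mul, abs_of_pos (by positivity)]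
      refine mul_le_of_le_one_right (by positivity) ?_
      have e : ∀ i : Fin n, (if i.val < k + 1 then c0 else a i) - (if i.val < k then c0 else a i) =
          if i.val = k then c0 - a i else 0 := by
        intro i
        rcases lt_trichotomy i.val k with h | h | h
        · rw [if_pos (by omega), if_pos h, if_neg (by omega)]; ring
        · rw [if_pos (by omega), if_neg (by omega), if_pos h]
        · rw [if_neg (by omega), if_neg (by omega), if_neg (by omega)]; ring
      simp_rw [e]
      by_cases hkn : k < n
      · rw [Finset.sum_eq_single ⟨k, hkn⟩]
        · simp only [if_true]
          have := ha0 ⟨k, hkn⟩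
          have := ha1 ⟨k, hkn⟩
          rw [abs_le]; constructor <;> linarith
        · intro i _ hi
          rw [if_neg]
          intro h; exact hi (Fin.ext h)
        · simp
      · rw [Finset.sum_eq_zero]
        · simp
        · intro i _
          rw [if_neg]
          have := i.is_lt
          omega)
  exact ⟨gk k, by rw [hv]; exact hk⟩

lemma ach_main {C S H : Type*} [Fintype C] [Fintype S] [Fintype H] [Nonempty H]
    {PCS : C → S → ℝ} {PS : S → ℝ} (hPS : IsPMF PS) (h0 : ∀ s, PS s = 0 → ∀ c, PCS c s = 0)
    (L : C → H → ℝ) (Q : S → H → ℝ)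
    (hd0 : ∀ s h, 0 ≤ dd PCS PS L s h) (hd1 : ∀ s h, dd PCS PS L s h ≤ 1)
    {Qt : S → H → ℝ} (hQt : IsRule Qt) {η : ℝ} (hη : 0 < η) {ε : ℝ}
    (hε : dsem PCS L Q Qt ≤ ε) :
    AchAvg PCS PS L Q (minfo PS Qt + 2 * η) (ε + 3 * η) := by
  set R := minfo PS Qt + 2 * η with hR
  set t := ∑ s, ∑ h, PS s * Qt s h * dd PCS PS L s h with ht
  have hdt : dsem PCS L Q Qt = t - doff PCS L Q := by
    rw [dsem_eq]
    congr 1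
    refine Finset.sum_congr rfl fun s _ => Finset.sum_congr rfl fun h _ => ?_
    by_cases hs : PS s = 0
    · simp [wloss, hs, h0 s hs]
    · unfold dd; field_simp
  by_cases hc : ∃ h, t + 2 * η ≤ ∑ s, PS s * dd PCS PS L s h
  · obtain ⟨hh, hc⟩ := hc
    have hev : ∀ᶠ n : ℕ in atTop, ∃ fg : ((Fin n → S) → Fin (numMsg R n)) ×
        (Fin (numMsg R n) → (Fin n → H)),
        |davgCode PCS PS L Q (fun x => fg.2 (fg.1 x)) - (t + 2 * η - doff PCS L Q)| ≤
          1 / (n : ℝ) := by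
      filter_upwards [ach_block hPS hQt (dd PCS PS L) hd0 hd1 hη, eventually_gt_atTop 0]
        with n hb hn
      obtain ⟨f, g, hfg⟩ := hb
      obtain ⟨g', hg'⟩ := interp hPS (dd PCS PS L) hd0 hd1 hn f g hh hc hfg
      refine ⟨⟨f, g'⟩, ?_⟩
      rw [davg_eq _ _ _ _ hn, sub_sub_sub_cancel_right]
      exact hg'
    have hall : ∀ n : ℕ, ∃ fg : ((Fin n → S) → Fin (numMsg R n)) ×
        (Fin (numMsg R n) → (Fin n → H)), (∃ fg : ((Fin n → S) → Fin (numMsg R n)) ×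
        (Fin (numMsg R n) → (Fin n → H)),
        |davgCode PCS PS L Q (fun x => fg.2 (fg.1 x)) - (t + 2 * η - doff PCS L Q)| ≤
          1 / (n : ℝ)) → 
        |davgCode PCS PS L Q (fun x => fg.2 (fg.1 x)) - (t + 2 * η - doff PCS L Q)| ≤
          1 / (n : ℝ) := by
      intro n
      by_cases h : ∃ fg : ((Fin n → S) → Fin (numMsg R n)) ×
        (Fin (numMsg R n) → (Fin n → H)),
        |davgCode PCS PS L Q (fun x => fg.2 (fg.1 x)) - (t + 2 * η - doff PCS L Q)| ≤
          1 / (n : ℝ)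
      · obtain ⟨fg, hfg⟩ := h
        exact ⟨fg, fun _ => hfg⟩
      · exact ⟨⟨fun _ => ⟨0, numMsg_pos R n⟩, fun _ _ => Classical.arbitrary H⟩,
          fun h' => absurd h' h⟩
    choose fg hfg using hall
    refine ⟨fun n => (fg n).1, fun n => (fg n).2, t + 2 * η - doff PCS L Q, ?_, by linarith⟩
    rw [tendsto_iff_dist_tendsto_zero]
    refine squeeze_zero' (Eventually.of_forall fun n => dist_nonneg) ?_
      tendsto_one_div_atTop_nhds_zero_nat
    filter_upwards [hev] with n hn
    rw [Real.dist_eq]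
    exact hfg n hn
  · push Not at hc
    let hh : H := Classical.arbitrary H
    refine ⟨fun n _ => ⟨0, numMsg_pos R n⟩, fun n _ _ => hh,
      ∑ s, PS s * dd PCS PS L s hh - doff PCS L Q, ?_, ?_⟩
    · refine Tendsto.congr' ?_ tendsto_const_nhds
      filter_upwards [eventually_gt_atTop 0] with n hn
      have hn' : (n : ℝ) ≠ 0 := by positivity
      rw [davg_eq _ _ _ _ hn]
      simp_rw [sum_pn_marg hPS _ (fun s => dd PCS PS L s hh)]
      simp
      field_simp
    · have := hc hh
      linarith

lemma numMsg_neg {R : ℝ} (hR : R < 0) : numMsg R = fun _ => 1 := by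
  funext n
  have h1 := numMsg_pos R n
  have h2 : numMsg R n ≤ 1 := by
    refine Nat.ceil_le.2 ?_
    simpa using Real.rpow_le_one_of_one_le_of_nonpos (x := 2) (by norm_num)
      (mul_nonpos_of_nonneg_of_nonpos (Nat.cast_nonneg n) hR.le)
  omega

lemma ach_neg {C S H : Type*} [Fintype C] [Fintype S] [Fintype H]
    {PCS : C → S → ℝ} {PS : S → ℝ} {L : C → H → ℝ} {Q : S → H → ℝ} {R R' ε : ℝ}
    (hR : R < 0) (hR' : R' < 0) (h : AchAvg PCS PS L Q R ε) : AchAvg PCS PS L Q R' ε := by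
  unfold AchAvg at h ⊢
  rw [numMsg_neg hR] at h
  rw [numMsg_neg hR']
  exact h

end Helpers

/-- **Rate–distortion theorem for `d_avg`** (Theorem 1): the rate–distortion
function `R(ε)` equals the minimum of `I_{Q̃}(S;H)` over all learning rules `Q̃`
with `d_sem(Q, Q̃) ≤ ε`. -/
theorem rate_distortion_davg
    {C S H : Type*} [Fintype C] [Fintype S] [Fintype H]
    [Nonempty C] [Nonempty S] [Nonempty H]
    (PC : C → ℝ) (hPC : IsPMF PC)
    (PSC : C → S → ℝ) (hPSC : ∀ c, IsPMF (PSC c))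
    (PCS : C → S → ℝ) (hPCS : PCS = fun c s => PC c * PSC c s)
    (PS : S → ℝ) (hPS : PS = fun s => ∑ c, PCS c s)
    (L : C → H → ℝ) (hL : ∀ c h, L c h ∈ Set.Icc (0 : ℝ) 1)
    (Q : S → H → ℝ) (hQ : IsRule Q) (ε : ℝ) :
    sInf {R : ℝ | (R, ε) ∈ closure {p : ℝ × ℝ | AchAvg PCS PS L Q p.1 p.2}} =
      sInf {r : ℝ | ∃ Qt : S → H → ℝ, IsRule Qt ∧ dsem PCS L Q Qt ≤ ε ∧
        r = minfo PS Qt} := by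
  have hPCS0 : ∀ c s, 0 ≤ PCS c s := by
    intro c s; rw [hPCS]; exact mul_nonneg (hPC.1 c) ((hPSC c).1 s)
  have hPSe : ∀ s, PS s = ∑ c, PCS c s := fun s => by rw [hPS]
  have hP : IsPMF PS := by
    refine ⟨fun s => by rw [hPSe]; exact Finset.sum_nonneg fun c _ => hPCS0 c s, ?_⟩
    simp_rw [hPSe]
    rw [Finset.sum_comm, hPCS]
    simp_rw [← Finset.mul_sum, (hPSC _).2]
    simp [hPC.2]
  have h0 : ∀ s, PS s = 0 → ∀ c, PCS c s = 0 := by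
    intro s hs c
    rw [hPSe] at hs
    exact (Finset.sum_eq_zero_iff_of_nonneg fun c _ => hPCS0 c s).1 hs c (Finset.mem_univ c)
  have hd0 : ∀ s h, 0 ≤ dd PCS PS L s h := fun s h =>
    div_nonneg (Finset.sum_nonneg fun c _ => mul_nonneg (hPCS0 c s) (hL c h).1) (hP.1 s)
  have hd1 : ∀ s h, dd PCS PS L s h ≤ 1 := fun s h => by
    refine div_le_one_of_le₀ ?_ (hP.1 s)
    rw [hPSe]
    exact Finset.sum_le_sum fun c _ => mul_le_of_le_one_right (hPCS0 c s) (hL c h).2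
  set A := {R : ℝ | (R, ε) ∈ closure {p : ℝ × ℝ | AchAvg PCS PS L Q p.1 p.2}} with hA
  set B := {r : ℝ | ∃ Qt : S → H → ℝ, IsRule Qt ∧ dsem PCS L Q Qt ≤ ε ∧
        r = minfo PS Qt} with hB
  have hBA : B ⊆ A := by
    rintro r ⟨Qt, hQt, hε, rfl⟩
    have hz := tendsto_one_div_add_atTop_nhds_zero_nat (𝕜 := ℝ)
    have t1 := (hz.const_mul 2).const_add (minfo PS Qt)
    have t2 := (hz.const_mul 3).const_add ε
    simp only [mul_zero, add_zero] at t1 t2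
    exact mem_closure_of_tendsto (t1.prodMk_nhds t2) (Eventually.of_forall fun k =>
      ach_main hP h0 L Q hd0 hd1 hQt (η := 1 / ((k : ℝ) + 1)) (by positivity) hε)
  have hAB : ∀ R ∈ A, ∃ b ∈ B, b ≤ max R 0 := by
    intro R hR
    obtain ⟨Qt, hQt, h1, h2⟩ := limit_rule hP L (Q := Q) (PCS := PCS) (r := max R 0) (ε := ε) (by
      intro δ hδ
      obtain ⟨u, hu, hlim⟩ := mem_closure_iff_seq_limit.1 hR
      have t1 : Tendsto (fun k => max (u k).1 0) atTop (nhds (max R 0)) :=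
        ((continuous_fst.tendsto _).comp hlim).max tendsto_const_nhds
      have t2 : Tendsto (fun k => (u k).2) atTop (nhds ε) := (continuous_snd.tendsto _).comp hlim
      obtain ⟨k, hk1, hk2⟩ := ((t1.eventually (gt_mem_nhds (show max R 0 < max R 0 + δ / 2 by
        linarith))).and (t2.eventually (gt_mem_nhds (show ε < ε + δ by linarith)))).exists
      obtain ⟨Qt, hQt, h1, h2⟩ := conv_ach hP h0 L hQ (hu k) (half_pos hδ)
      exact ⟨Qt, hQt, by linarith, by linarith⟩)
    exact ⟨minfo PS Qt, ⟨Qt, hQt, h1, rfl⟩, h2⟩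
  have hB0 : ∀ b ∈ B, 0 ≤ b := by
    rintro b ⟨Qt, hQt, -, rfl⟩
    exact minfo_nonneg hP hQt
  have hBbdd : BddBelow B := ⟨0, fun b hb => hB0 b hb⟩
  rcases B.eq_empty_or_nonempty with hBe | hBne
  · have hAe : A = ∅ := by
      refine Set.eq_empty_of_forall_notMem fun R hR => ?_
      obtain ⟨b, hb, -⟩ := hAB R hR
      rw [hBe] at hb
      exact hb
    rw [hAe, hBe]
  by_cases hneg : ∃ R ∈ A, R < 0
  · obtain ⟨R, hR, hR0⟩ := hneg
    have hall : ∀ R' < 0, R' ∈ A := by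
      intro R' hR'
      obtain ⟨u, hu, hlim⟩ := mem_closure_iff_seq_limit.1 hR
      have t1 : Tendsto (fun k => (u k).1) atTop (nhds R) := (continuous_fst.tendsto _).comp hlim
      have t2 : Tendsto (fun k => (u k).2) atTop (nhds ε) := (continuous_snd.tendsto _).comp hlim
      refine mem_closure_of_tendsto ((tendsto_const_nhds (x := R')).prodMk_nhds t2) ?_
      filter_upwards [t1.eventually (gt_mem_nhds hR0)] with k hk
      exact ach_neg hk hR' (hu k)
    have hnb : ¬ BddBelow A := by
      rintro ⟨m, hm⟩
      have h1 : min m 0 - 1 < 0 := by have := min_le_right m 0; linarith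
      have h2 := hm (hall _ h1)
      have := min_le_left m 0
      linarith
    rw [Real.sInf_of_not_bddBelow hnb]
    obtain ⟨b, hb, hb0⟩ := hAB R hR
    rw [max_eq_right hR0.le] at hb0
    exact le_antisymm (le_csInf hBne hB0) ((csInf_le hBbdd hb).trans hb0)
  · push Not at hneg
    refine le_antisymm (csInf_le_csInf ⟨0, fun R hR => hneg R hR⟩ hBne hBA) ?_
    refine le_csInf (hBne.mono hBA) fun R hR => ?_
    obtain ⟨b, hb, hb0⟩ := hAB R hR
    rw [max_eq_left (hneg R hR)] at hb0
    exact (csInf_le hBbdd hb).trans hb0
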